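/- Let N,d ≥ 1, let Δ ∈ ℝ^{N×N} be symmetric positive semidefinite with largest eigenvalue λ₁ and smallest eigenvalue λ₂, let λ > 0, and let 0 < τ ≤ 1/λ₁ (assuming λ₁ > 0). Define Z^(k+1) = (I − τΔ)Z^(k) from any Z^(0) ∈ ℝ^{N×d} and E(Z,k) = ‖Z − Z^(k)‖_F² + λ·tr(Zᵀ Δ Z). Then the energy decreases at a geometric rate: for every k ≥ 1, E(Z^(k), k−1) ≤ (1 − τλ₂)^{2(k−1)} · E(Z^(1), 0). -/

import Mathlib

open Finset Matrix

/-! With `A = 1 - τΔ`, both `Z (k + 1)` and `Z (k + 1) - Z k` evolve by left multiplication by `A`,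
and each part of the energy is a form `X ↦ tr (Xᴴ M X)` with `M ∈ {1, Δ}` positive semidefinite and
commuting with `A`. If the spectrum of `A` lies in `[-c, c]`, then `Aᴴ A ≤ c²`, so
`c² M - Aᴴ M A = M (c² - Aᴴ A)` is a product of commuting positive elements: each application of `A`
shrinks both forms, hence the energy, by the factor `c²`. -/

lemma abs_one_sub_mul_le_of_mem_Icc {t a b x : ℝ} (ht : 0 ≤ t) (htb : t * b ≤ 1)
    (hx : x ∈ Set.Icc a b) : |1 - t * x| ≤ 1 - t * a := by
  have htx : t * x ≤ 1 := (mul_le_mul_of_nonneg_left hx.2 ht).trans htb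
  rw [abs_of_nonneg (sub_nonneg.2 htx)]
  exact sub_le_sub_left (mul_le_mul_of_nonneg_left hx.1 ht) 1

section StarOrderedRing

variable {R : Type*} [Ring R] [PartialOrder R] [StarRing R] [StarOrderedRing R]
  [TopologicalSpace R] [Algebra ℝ R] [ContinuousFunctionalCalculus ℝ R IsSelfAdjoint]
  [NonnegSpectrumClass ℝ R]

lemma star_mul_mul_le_smul_of_commute {a b : R} {r : ℝ} (hb : 0 ≤ b) (hab : Commute a b)
    (ha : star a * a ≤ algebraMap ℝ R r) : star a * b * a ≤ r • b := by
  have hstar : Commute b (star a) := by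
    simpa only [hb.isSelfAdjoint.star_eq] using hab.symm.star_star
  have hcomm : Commute b (algebraMap ℝ R r - star a * a) :=
    (Algebra.commute_algebraMap_right r b).sub_right (hstar.mul_right hab.symm)
  have hfactor : r • b - star a * b * a = b * (algebraMap ℝ R r - star a * a) := by
    rw [mul_sub, ← Algebra.commutes, ← Algebra.smul_def, ← hstar.eq, mul_assoc]
  rw [← sub_nonneg, hfactor]
  exact hcomm.mul_nonneg hb (sub_nonneg.2 ha)

lemma sq_one_sub_smul_le {a : R} (ha : IsSelfAdjoint a) {t c : ℝ}
    (h : ∀ x ∈ spectrum ℝ a, |1 - t * x| ≤ c) :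
    (1 - t • a) ^ 2 ≤ algebraMap ℝ R (c ^ 2) := by
  have hcfc : (1 - t • a) ^ 2 = cfc (fun x : ℝ => (1 - t * x) ^ 2) a := by
    rw [cfc_pow _ 2 a, cfc_sub .., cfc_const_one ℝ a, cfc_const_mul_id t a]
  rw [hcfc, cfc_le_algebraMap_iff ..]
  exact fun x hx => sq_le_sq.2 ((h x hx).trans (le_abs_self c))

end StarOrderedRing

section Energy

open scoped MatrixOrder ComplexOrder

variable {𝕜 m n : Type*} [RCLike 𝕜] [Fintype m] [Fintype n]

/-- The quadratic form `tr (Xᴴ M X)` of `M` summed over the columns of `X`, as a real number (the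
imaginary part vanishes for Hermitian `M`). -/
def traceQuadForm (M : Matrix m m 𝕜) (X : Matrix m n 𝕜) : ℝ :=
  RCLike.re (Xᴴ * M * X).trace

/-- The energy `‖Z - W‖_F² + lam tr (Zᴴ Δ Z)` of a point `Z` relative to a reference point `W`; the
paper's `E(Z, k)` is the case `W = Z^(k)`. The Frobenius norm is written out entrywise. -/
def diffusionEnergy (Δ : Matrix m m 𝕜) (lam : ℝ) (Z W : Matrix m n 𝕜) : ℝ :=
  (∑ i, ∑ j, ‖Z i j - W i j‖ ^ 2) + lam * traceQuadForm Δ Z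

lemma traceQuadForm_mul (M A : Matrix m m 𝕜) (X : Matrix m n 𝕜) :
    traceQuadForm M (A * X) = traceQuadForm (Aᴴ * M * A) X := by
  simp only [traceQuadForm, conjTranspose_mul, Matrix.mul_assoc]

lemma traceQuadForm_smul (r : ℝ) (M : Matrix m m 𝕜) (X : Matrix m n 𝕜) :
    traceQuadForm (r • M) X = r * traceQuadForm M X := by
  simp only [traceQuadForm, Matrix.mul_smul, Matrix.smul_mul, trace_smul, RCLike.smul_re]

lemma traceQuadForm_mono {M₁ M₂ : Matrix m m 𝕜} (h : M₁ ≤ M₂) (X : Matrix m n 𝕜) :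
    traceQuadForm M₁ X ≤ traceQuadForm M₂ X := by
  have hnonneg := (RCLike.nonneg_iff.1 (h.conjTranspose_mul_mul_same X).trace_nonneg).1
  rwa [Matrix.mul_sub, Matrix.sub_mul, trace_sub, map_sub, sub_nonneg] at hnonneg

variable [DecidableEq m]

lemma traceQuadForm_one (X : Matrix m n 𝕜) : traceQuadForm 1 X = ∑ i, ∑ j, ‖X i j‖ ^ 2 := by
  rw [Finset.sum_comm]
  simp only [traceQuadForm, Matrix.mul_one, trace, diag_apply, mul_apply, conjTranspose_apply,
    RCLike.star_def, RCLike.conj_mul, map_sum, ← RCLike.ofReal_pow, RCLike.ofReal_re]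

lemma traceQuadForm_mul_le {M A : Matrix m m 𝕜} {r : ℝ} (hM : 0 ≤ M) (hAM : Commute A M)
    (hA : Aᴴ * A ≤ algebraMap ℝ _ r) (X : Matrix m n 𝕜) :
    traceQuadForm M (A * X) ≤ r * traceQuadForm M X := by
  rw [traceQuadForm_mul, ← traceQuadForm_smul]
  exact traceQuadForm_mono (star_mul_mul_le_smul_of_commute hM hAM hA) X

lemma diffusionEnergy_mul_le {Δ A : Matrix m m 𝕜} {lam r : ℝ} (hΔ : 0 ≤ Δ) (hlam : 0 ≤ lam)
    (hAΔ : Commute A Δ) (hA : Aᴴ * A ≤ algebraMap ℝ _ r) (Z W : Matrix m n 𝕜) :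
    diffusionEnergy Δ lam (A * Z) (A * W) ≤ r * diffusionEnergy Δ lam Z W := by
  have hfidelity := traceQuadForm_mul_le PosSemidef.one.nonneg (.one_right A) hA (Z - W)
  have hdirichlet := traceQuadForm_mul_le hΔ hAΔ hA Z
  simp only [traceQuadForm_one, Matrix.mul_sub, Matrix.sub_apply] at hfidelity
  calc diffusionEnergy Δ lam (A * Z) (A * W)
      ≤ r * (∑ i, ∑ j, ‖Z i j - W i j‖ ^ 2) + lam * (r * traceQuadForm Δ Z) :=
        add_le_add hfidelity (mul_le_mul_of_nonneg_left hdirichlet hlam)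
    _ = r * diffusionEnergy Δ lam Z W := by rw [diffusionEnergy]; ring

theorem stmt_19_general {Δ : Matrix m m 𝕜} (hΔ : Δ.PosSemidef) {lam τ c : ℝ} (hlam : 0 ≤ lam)
    (hc : ∀ μ ∈ spectrum ℝ Δ, |1 - τ * μ| ≤ c) {Z : ℕ → Matrix m n 𝕜}
    (hZ : ∀ k, Z (k + 1) = (1 - τ • Δ) * Z k) (k : ℕ) :
    diffusionEnergy Δ lam (Z (k + 1)) (Z k) ≤ c ^ (2 * k) * diffusionEnergy Δ lam (Z 1) (Z 0) := by
  have hself : IsSelfAdjoint (1 - τ • Δ) :=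
    (IsSelfAdjoint.one _).sub (.smul (.all τ) hΔ.isHermitian.isSelfAdjoint)
  have hcomm : Commute (1 - τ • Δ) Δ :=
    (Commute.one_left Δ).sub_left ((Commute.refl Δ).smul_left τ)
  have hcontr : (1 - τ • Δ)ᴴ * (1 - τ • Δ) ≤ algebraMap ℝ _ (c ^ 2) := by
    rw [← star_eq_conjTranspose, hself.star_eq, ← sq]
    exact sq_one_sub_smul_le hΔ.isHermitian.isSelfAdjoint hc
  rw [pow_mul]
  refine le_geom (u := fun k => diffusionEnergy Δ lam (Z (k + 1)) (Z k)) (sq_nonneg c) k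
    fun j _ => ?_
  simpa only [← hZ] using diffusionEnergy_mul_le hΔ.nonneg hlam hcomm hcontr (Z (j + 1)) (Z j)

end Energy

/-- geometric decrease of the energy
`E(Z,k) = ‖Z − Z^(k)‖_F² + lam tr(Zᵀ Δ Z)` along the diffusion iteration
`Z^(k+1) = (I − τΔ) Z^(k)`:
`E(Z^(k), k−1) ≤ (1 − τ lam2)^{2(k−1)} E(Z^(1), 0)` for every `k ≥ 1`. -/
theorem stmt_19 (N d : ℕ) (hN : 1 ≤ N) (hd : 1 ≤ d)
    (Δ : Matrix (Fin N) (Fin N) ℝ)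
    (hH : Δ.IsHermitian) (hΔ : Δ.PosSemidef)
    (lam1 lam2 : ℝ)
    (hlam1 : IsGreatest (Set.range hH.eigenvalues) lam1)
    (hlam2 : IsLeast (Set.range hH.eigenvalues) lam2)
    (lam : ℝ) (hlam : 0 < lam)
    (hlam1pos : 0 < lam1)
    (τ : ℝ) (hτ : 0 < τ) (hτ1 : τ ≤ 1 / lam1)
    (Z : ℕ → Matrix (Fin N) (Fin d) ℝ)
    (hZ : ∀ k, Z (k + 1) = ((1 : Matrix (Fin N) (Fin N) ℝ) - τ • Δ) * Z k) :
    ∀ k, 1 ≤ k →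
      (∑ i, ∑ c, (Z k i c - Z (k - 1) i c) ^ 2)
          + lam * ((Z k)ᵀ * Δ * Z k).trace
        ≤ (1 - τ * lam2) ^ (2 * (k - 1))
          * ((∑ i, ∑ c, (Z 1 i c - Z 0 i c) ^ 2)
            + lam * ((Z 1)ᵀ * Δ * Z 1).trace) := by
  rintro (_ | k) hk
  · omega
  have hrate : ∀ μ ∈ spectrum ℝ Δ, |1 - τ * μ| ≤ 1 - τ * lam2 := fun μ hμ => by
    rw [hH.spectrum_real_eq_range_eigenvalues] at hμ
    exact abs_one_sub_mul_le_of_mem_Icc hτ.le ((le_div_iff₀ hlam1pos).1 hτ1)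
      ⟨hlam2.2 hμ, hlam1.2 hμ⟩
  simpa [diffusionEnergy, traceQuadForm] using stmt_19_general hΔ hlam.le hrate hZ k
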